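/- Let ψ^{AR} be a density operator on A⊗R with A = A₁⊗A₂ and d_A ≥ 2. Then ∫_{U(A)} Tr[ σ^{A₂R}(U) ( σ^{A₂}(U) ⊗ σ^R(U) ) ] dU = ((p+q)/2) Tr[(ψ^R)²] + ((p−q)/2) Tr[ ψ^{AR} (ψ^A ⊗ ψ^R) ], where p = (d_{A₁}+d_{A₂})/(d_A+1) and q = (d_{A₁}−d_{A₂})/(d_A−1). -/

import Mathlib

open Matrix MeasureTheory
open scoped Kronecker ComplexOrder

noncomputable instance matMeas {m n : Type*} : MeasurableSpace (Matrix m n ℂ) :=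
  (inferInstance : MeasurableSpace (m → n → ℂ))

/-- `σ^{A₂R}(U) = Tr_{A₁}[(U ⊗ I_R) ψ (U ⊗ I_R)ᴴ]`. -/
noncomputable def sigmaA2R {ιA₁ ιA₂ ιR : Type} [Fintype ιA₁] [Fintype ιA₂] [Fintype ιR]
    [DecidableEq ιR]
    (ψ : Matrix ((ιA₁ × ιA₂) × ιR) ((ιA₁ × ιA₂) × ιR) ℂ)
    (U : Matrix (ιA₁ × ιA₂) (ιA₁ × ιA₂) ℂ) : Matrix (ιA₂ × ιR) (ιA₂ × ιR) ℂ :=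
  Matrix.of fun i j => ∑ a₁ : ιA₁,
    ((U ⊗ₖ (1 : Matrix ιR ιR ℂ)) * ψ * (U ⊗ₖ (1 : Matrix ιR ιR ℂ))ᴴ)
      ((a₁, i.1), i.2) ((a₁, j.1), j.2)

/-- Partial trace over the first tensor factor. -/
noncomputable def ptrFst {α β : Type*} [Fintype α] (M : Matrix (α × β) (α × β) ℂ) :
    Matrix β β ℂ :=
  Matrix.of fun i j => ∑ a : α, M (a, i) (a, j)

/-- Partial trace over the second tensor factor. -/
noncomputable def ptrSnd {α β : Type*} [Fintype β] (M : Matrix (α × β) (α × β) ℂ) :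
    Matrix α α ℂ :=
  Matrix.of fun i j => ∑ b : β, M (i, b) (j, b)

set_option linter.unusedSectionVars false

section helpers
variable {n : Type} [Fintype n] [DecidableEq n]

def BM (f : Matrix.unitaryGroup n ℂ → ℂ) : Prop := Measurable f ∧ ∃ C : ℝ, ∀ x, ‖f x‖ ≤ C

lemma BM.mul {f g : Matrix.unitaryGroup n ℂ → ℂ} (hf : BM f) (hg : BM g) :
    BM (fun x => f x * g x) := by
  obtain ⟨hf, C, hC⟩ := hf
  obtain ⟨hg, D, hD⟩ := hg
  refine ⟨hf.mul hg, C * D, fun x => ?_⟩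
  rw [norm_mul]
  exact mul_le_mul (hC x) (hD x) (norm_nonneg _) ((norm_nonneg _).trans (hC x))

lemma BM.const (c : ℂ) : BM (fun _ : Matrix.unitaryGroup n ℂ => c) :=
  ⟨measurable_const, ‖c‖, fun _ => le_rfl⟩

lemma BM.sum {ι : Type} [Fintype ι] {f : ι → Matrix.unitaryGroup n ℂ → ℂ} (hf : ∀ i, BM (f i)) :
    BM (fun x => ∑ i, f i x) := by
  choose h1 C hC using hf
  refine ⟨Finset.measurable_fun_sum _ fun i _ => h1 i, ∑ i, C i, fun x => ?_⟩
  exact (norm_sum_le _ _).trans (Finset.sum_le_sum fun i _ => hC i x)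

lemma BM.coe_entry (i j : n) : BM (fun U : Matrix.unitaryGroup n ℂ => (U : Matrix n n ℂ) i j) := by
  refine ⟨?_, 1, fun U => entry_norm_bound_of_unitary U.2 i j⟩
  have h : Measurable (fun M : Matrix n n ℂ => M i j) :=
    (measurable_pi_apply j).comp (measurable_pi_apply (X := fun _ : n => n → ℂ) i)
  exact h.comp measurable_subtype_coe

lemma BM.star {f : Matrix.unitaryGroup n ℂ → ℂ} (hf : BM f) : BM (fun x => star (f x)) := by
  obtain ⟨hf, C, hC⟩ := hf
  refine ⟨continuous_star.measurable.comp hf, C, fun x => ?_⟩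
  rw [norm_star]; exact hC x

lemma BM.integrable {f : Matrix.unitaryGroup n ℂ → ℂ} (hf : BM f)
    (μ : Measure (Matrix.unitaryGroup n ℂ)) [IsProbabilityMeasure μ] : Integrable f μ := by
  obtain ⟨hf, C, hC⟩ := hf
  exact Integrable.of_bound hf.aestronglyMeasurable C (Filter.Eventually.of_forall hC)

/-- conjugation by a unitary -/
noncomputable def cj (M : Matrix n n ℂ) (U : Matrix.unitaryGroup n ℂ) : Matrix n n ℂ :=
  (U : Matrix n n ℂ) * M * (U : Matrix n n ℂ)ᴴ

lemma BM.cj (M : Matrix n n ℂ) (i j : n) : BM (fun U => cj M U i j) := by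
  simp only [_root_.cj, Matrix.mul_apply, Matrix.conjTranspose_apply]
  exact BM.sum fun k => (BM.sum fun l => (BM.coe_entry _ _).mul (BM.const _)).mul
    (BM.coe_entry _ _).star

lemma cj_trace (M : Matrix n n ℂ) (U : Matrix.unitaryGroup n ℂ) : (cj M U).trace = M.trace := by
  rw [cj, Matrix.trace_mul_cycle]
  have := Matrix.mem_unitaryGroup_iff'.1 U.2
  rw [star_eq_conjTranspose] at this
  rw [this, one_mul]

lemma cj_mul (M N : Matrix n n ℂ) (U : Matrix.unitaryGroup n ℂ) :
    cj M U * cj N U = cj (M * N) U := by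
  have := Matrix.mem_unitaryGroup_iff'.1 U.2
  rw [star_eq_conjTranspose] at this
  simp only [cj]
  calc _ = (U : Matrix n n ℂ) * M * ((U : Matrix n n ℂ)ᴴ * (U : Matrix n n ℂ)) * N * (U : Matrix n n ℂ)ᴴ := by
        simp only [mul_assoc]
    _ = _ := by rw [this]; simp only [mul_assoc, one_mul]

noncomputable def EE (μ : Measure (Matrix.unitaryGroup n ℂ)) (M N : Matrix n n ℂ) (i j k l : n) : ℂ :=
  ∫ U, cj M U i j * cj N U k l ∂μ

variable (μ : Measure (Matrix.unitaryGroup n ℂ)) [IsProbabilityMeasure μ]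
    (hμ : ∀ V : Matrix.unitaryGroup n ℂ,
      μ.map (fun U : Matrix.unitaryGroup n ℂ => V * U) = μ) (M N : Matrix n n ℂ)

lemma measurable_lmul (V : Matrix.unitaryGroup n ℂ) :
    Measurable (fun U : Matrix.unitaryGroup n ℂ => V * U) := by
  refine Measurable.subtype_mk ?_
  refine measurable_pi_iff.2 fun i => measurable_pi_iff.2 fun j => ?_
  change Measurable fun U : Matrix.unitaryGroup n ℂ => ((V : Matrix n n ℂ) * (U : Matrix n n ℂ)) i j
  simp only [Matrix.mul_apply]
  exact (BM.sum fun k => (BM.const _).mul (BM.coe_entry _ _)).1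

include hμ in
lemma EE_inv (V : Matrix n n ℂ) (hV : V ∈ Matrix.unitaryGroup n ℂ) (i j k l : n) :
    EE μ M N i j k l = ∫ U, (V * cj M U * Vᴴ) i j * (V * cj N U * Vᴴ) k l ∂μ := by
  have h := hμ ⟨V, hV⟩
  unfold EE
  conv_lhs => rw [← h]
  rw [integral_map (measurable_lmul _).aemeasurable]
  · simp [cj, mul_assoc]
  · exact ((BM.cj M i j).mul (BM.cj N k l)).1.aestronglyMeasurable

include hμ in
lemma EE_diag (v : n → ℂ) (hv : ∀ i, v i * star (v i) = 1) (i j k l : n) :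
    EE μ M N i j k l = v i * star (v j) * (v k * star (v l)) * EE μ M N i j k l := by
  have hV : Matrix.diagonal v ∈ Matrix.unitaryGroup n ℂ := by
    rw [Matrix.mem_unitaryGroup_iff, star_eq_conjTranspose, Matrix.diagonal_conjTranspose,
      Matrix.diagonal_mul_diagonal]
    simp only [Pi.star_apply, hv, Matrix.diagonal_one]
  conv_lhs => rw [EE_inv μ hμ M N _ hV]
  unfold EE
  rw [← integral_const_mul]
  congr 1; ext U
  simp only [Matrix.diagonal_conjTranspose, Matrix.mul_diagonal, Matrix.diagonal_mul, Pi.star_apply]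
  ring

include hμ in
lemma EE_perm (σ : Equiv.Perm n) (i j k l : n) :
    EE μ M N i j k l = EE μ M N (σ i) (σ j) (σ k) (σ l) := by
  have hV : σ.permMatrix ℂ ∈ Matrix.unitaryGroup n ℂ := by
    rw [Matrix.mem_unitaryGroup_iff, star_eq_conjTranspose]
    simp [Matrix.conjTranspose_permMatrix, ← Matrix.permMatrix_mul]
  rw [EE_inv μ hμ M N _ hV]
  have key : ∀ X : Matrix n n ℂ, ∀ i j, (σ.permMatrix ℂ * X * (σ.permMatrix ℂ)ᴴ) i j = X (σ i) (σ j) := by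
    intro X i j
    simp [Matrix.mul_apply, PEquiv.toMatrix_apply, Equiv.toPEquiv_apply, Equiv.symm_apply_eq]
  simp only [key]; rfl

include hμ in
lemma EE_zero (i j k l : n) (h1 : ¬ (i = j ∧ k = l)) (h2 : ¬ (i = l ∧ k = j)) :
    EE μ M N i j k l = 0 := by
  have key : ∀ a, EE μ M N i j k l = _ := fun a =>
    EE_diag μ hμ M N (fun x => if x = a then Complex.I else 1)
      (by intro i; split_ifs <;> simp) i j k l
  have fin : ∀ c : ℂ, c ≠ 1 → EE μ M N i j k l = c * EE μ M N i j k l → EE μ M N i j k l = 0 := by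
    intro c hc h
    have : (1 - c) * EE μ M N i j k l = 0 := by linear_combination h
    exact (mul_eq_zero.1 this).resolve_left (sub_ne_zero.2 hc.symm)
  have hI : Complex.I ≠ 1 := by intro h; simpa using congrArg Complex.re h
  by_cases hij : i = j
  · have hkl : k ≠ l := fun h => h1 ⟨hij, h⟩
    refine fin _ ?_ (key k)
    subst hij
    by_cases hik : i = k
    · simp [hik, hkl.symm, hI]
    · simp [hik, hkl.symm, hI]
  · by_cases hil : i = l
    · have hkj : k ≠ j := fun h => h2 ⟨hil, h⟩
      refine fin _ ?_ (key k)
      subst hil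
      by_cases hik : i = k
      · subst hik; simp [hkj.symm, hI]
      · simp [hik, hkj.symm, hI]
    · refine fin _ ?_ (key i)
      by_cases hik : k = i
      · simp [hik, Ne.symm hij, Ne.symm hil]; norm_num
      · simp [hik, Ne.symm hij, Ne.symm hil, hI]

lemma exists_perm {a b i k : n} (hab : a ≠ b) (hik : i ≠ k) : ∃ σ : Equiv.Perm n, σ a = i ∧ σ b = k := by
  refine ⟨Equiv.swap (Equiv.swap a i b) k * Equiv.swap a i, ?_, ?_⟩
  · rw [Equiv.Perm.mul_apply, Equiv.swap_apply_left]
    refine Equiv.swap_apply_of_ne_of_ne ?_ hik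
    intro h
    apply hab
    apply (Equiv.swap a i).injective
    rw [← h, Equiv.swap_apply_left]
  · simp

include hμ in
lemma EE_rot (a b : n) (hab : a ≠ b) :
    EE μ M N a a a a = EE μ M N a a b b + EE μ M N a b b a := by
  let u : n → ℂ := fun x => if x = a then 1 else if x = b then -2 else 0
  let V : Matrix n n ℂ := 1 - (2/5 : ℂ) • Matrix.vecMulVec u u
  have hus : star u = u := by
    ext x; simp only [u, Pi.star_apply]; split_ifs <;> simp
  have huu : u ⬝ᵥ u = 5 := by
    have : ∀ x, u x * u x = (if x = a then (1:ℂ) else 0) + (if x = b then 4 else 0) := by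
      intro x; simp only [u]; by_cases h1 : x = a
      · subst h1; simp [hab]
      · by_cases h2 : x = b
        · subst h2; simp [h1]; norm_num
        · simp [h1, h2]
    simp only [dotProduct, this, Finset.sum_add_distrib, Finset.sum_ite_eq', Finset.mem_univ, if_true]
    norm_num
  have hVs : Vᴴ = V := by
    simp only [V, Matrix.conjTranspose_sub, Matrix.conjTranspose_smul, Matrix.conjTranspose_one,
      Matrix.conjTranspose_vecMulVec, hus]
    simp
  have hV : V ∈ Matrix.unitaryGroup n ℂ := by
    rw [Matrix.mem_unitaryGroup_iff, star_eq_conjTranspose, hVs]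
    have h2 : Matrix.vecMulVec u u * Matrix.vecMulVec u u = (5:ℂ) • Matrix.vecMulVec u u := by
      rw [Matrix.vecMulVec_mul_vecMulVec, huu]
      ext i j; simp [Matrix.vecMulVec_apply]; ring
    simp only [V, mul_sub, sub_mul, mul_one, one_mul, Matrix.smul_mul, Matrix.mul_smul, h2, smul_smul]
    module
  have hrow : ∀ x, V a x = (if x = a then (3/5:ℂ) else 0) + (if x = b then 4/5 else 0) := by
    intro x
    simp only [V, Matrix.sub_apply, Matrix.smul_apply, Matrix.vecMulVec_apply, Matrix.one_apply, u]
    by_cases h1 : x = a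
    · subst h1; simp [hab]; norm_num
    · by_cases h2 : x = b
      · subst h2; simp [h1, hab]; norm_num
      · simp [h1, h2, Ne.symm h1]
  let ix : Fin 2 → n := ![a, b]
  let w : Fin 2 → ℂ := ![3/5, 4/5]
  have key : ∀ X : Matrix n n ℂ, (V * X * Vᴴ) a a = ∑ p : Fin 2, ∑ q : Fin 2, w p * w q * X (ix p) (ix q) := by
    intro X
    simp only [Matrix.mul_apply, Matrix.conjTranspose_apply, hrow, star_add, add_mul, mul_add,
      Finset.sum_add_distrib, Fin.sum_univ_two, ix, w, apply_ite star, star_zero, ite_mul, mul_ite,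
      zero_mul, mul_zero, Finset.sum_ite_eq', Finset.mem_univ, if_true]
    simp
    ring
  have h := EE_inv μ hμ M N V hV a a a a
  simp only [key] at h
  have h3 : EE μ M N a a a a = ∑ p : Fin 2, ∑ q : Fin 2, ∑ r : Fin 2, ∑ s : Fin 2,
      w p * w q * w r * w s * EE μ M N (ix p) (ix q) (ix r) (ix s) := by
    rw [h]
    have : ∀ U : Matrix.unitaryGroup n ℂ, (∑ p : Fin 2, ∑ q : Fin 2, w p * w q * cj M U (ix p) (ix q)) *
        (∑ p : Fin 2, ∑ q : Fin 2, w p * w q * cj N U (ix p) (ix q)) =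
        ∑ p : Fin 2, ∑ q : Fin 2, ∑ r : Fin 2, ∑ s : Fin 2,
          w p * w q * w r * w s * (cj M U (ix p) (ix q) * cj N U (ix r) (ix s)) := by
      intro U
      simp only [Fin.sum_univ_two]
      ring
    simp only [this]
    have hb : ∀ p q r s : Fin 2, BM fun U => w p * w q * w r * w s *
        (cj M U (ix p) (ix q) * cj N U (ix r) (ix s)) := fun p q r s =>
      (BM.const _).mul ((BM.cj _ _ _).mul (BM.cj _ _ _))
    rw [integral_finsetSum _ fun p _ => (BM.sum fun q => BM.sum fun r => BM.sum fun s => hb p q r s).integrable μ]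
    refine Finset.sum_congr rfl fun p _ => ?_
    rw [integral_finsetSum _ fun q _ => (BM.sum fun r => BM.sum fun s => hb p q r s).integrable μ]
    refine Finset.sum_congr rfl fun q _ => ?_
    rw [integral_finsetSum _ fun r _ => (BM.sum fun s => hb p q r s).integrable μ]
    refine Finset.sum_congr rfl fun r _ => ?_
    rw [integral_finsetSum _ fun s _ => (hb p q r s).integrable μ]
    refine Finset.sum_congr rfl fun s _ => ?_
    rw [integral_const_mul]; rfl
  have hz : ∀ i j k l, ¬ (i = j ∧ k = l) → ¬ (i = l ∧ k = j) → EE μ M N i j k l = 0 :=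
    EE_zero μ hμ M N
  have s1 := EE_perm μ hμ M N (Equiv.swap a b) b b b b
  have s2 := EE_perm μ hμ M N (Equiv.swap a b) b b a a
  have s3 := EE_perm μ hμ M N (Equiv.swap a b) b a a b
  simp only [Equiv.swap_apply_left, Equiv.swap_apply_right] at s1 s2 s3
  simp only [Fin.sum_univ_two, ix, w, Matrix.cons_val_zero, Matrix.cons_val_one] at h3
  rw [hz a a a b, hz a a b a, hz a b a a, hz b a a a, hz a b a b, hz b a b a, hz b b b a, hz b b a b,
    hz b a b b, hz a b b b, s1, s2, s3] at h3
  · linear_combination (625/288 : ℂ) * h3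
  all_goals simp [hab, hab.symm]

include hμ in
lemma EE_form (hn : 2 ≤ Fintype.card n) : ∃ P Q : ℂ, ∀ i j k l, EE μ M N i j k l =
    (if i = j ∧ k = l then P else 0) + (if i = l ∧ k = j then Q else 0) := by
  obtain ⟨a, b, hab⟩ := Fintype.one_lt_card_iff.1 (show 1 < Fintype.card n by omega)
  have hP : ∀ i k, i ≠ k → EE μ M N i i k k = EE μ M N a a b b := by
    intro i k hik
    obtain ⟨σ, rfl, rfl⟩ := exists_perm hab hik
    exact (EE_perm μ hμ M N σ _ _ _ _).symm
  have hQ : ∀ i k, i ≠ k → EE μ M N i k k i = EE μ M N a b b a := by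
    intro i k hik
    obtain ⟨σ, rfl, rfl⟩ := exists_perm hab hik
    exact (EE_perm μ hμ M N σ _ _ _ _).symm
  refine ⟨EE μ M N a a b b, EE μ M N a b b a, fun i j k l => ?_⟩
  by_cases h1 : i = j ∧ k = l
  · obtain ⟨rfl, rfl⟩ := h1
    by_cases h : i = k
    · subst h
      have : Nontrivial n := ⟨a, b, hab⟩
      obtain ⟨c, hc⟩ := exists_ne i
      rw [EE_rot μ hμ M N i c hc.symm, hP _ _ hc.symm, hQ _ _ hc.symm]; simp
    · rw [hP _ _ h]; simp [h]
  · by_cases h2 : i = l ∧ k = j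
    · obtain ⟨rfl, rfl⟩ := h2
      have h : i ≠ k := fun h => h1 ⟨h, h.symm⟩
      rw [hQ _ _ h]; simp [h]
    · rw [EE_zero μ hμ M N _ _ _ _ h1 h2]; simp [h1, h2]

lemma EE_tr1 : ∑ i, ∑ k, EE μ M N i i k k = M.trace * N.trace := by
  have : ∀ U : Matrix.unitaryGroup n ℂ, ∑ i, ∑ k, cj M U i i * cj N U k k = M.trace * N.trace := by
    intro U
    rw [← cj_trace M U, ← cj_trace N U, Matrix.trace, Matrix.trace, Finset.sum_mul_sum]; rfl
  have h2 : ∫ U, (∑ i, ∑ k, cj M U i i * cj N U k k) ∂μ = M.trace * N.trace := by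
    simp [this]
  rw [← h2, integral_finsetSum _ fun i _ => (BM.sum fun k => (BM.cj M i i).mul (BM.cj N k k)).integrable μ]
  refine Finset.sum_congr rfl fun i _ => ?_
  rw [integral_finsetSum _ fun k _ => ((BM.cj M i i).mul (BM.cj N k k)).integrable μ]
  rfl

lemma EE_tr2 : ∑ i, ∑ k, EE μ M N i k k i = (M * N).trace := by
  have : ∀ U : Matrix.unitaryGroup n ℂ, ∑ i, ∑ k, cj M U i k * cj N U k i = (M * N).trace := by
    intro U
    rw [← cj_trace (M * N) U, ← cj_mul, Matrix.trace]; rfl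
  have h2 : ∫ U, (∑ i, ∑ k, cj M U i k * cj N U k i) ∂μ = (M * N).trace := by
    simp [this]
  rw [← h2, integral_finsetSum _ fun i _ => (BM.sum fun k => (BM.cj M i k).mul (BM.cj N k i)).integrable μ]
  refine Finset.sum_congr rfl fun i _ => ?_
  rw [integral_finsetSum _ fun k _ => ((BM.cj M i k).mul (BM.cj N k i)).integrable μ]
  rfl

end helpers

section red
variable {α β ρ : Type} [Fintype α] [DecidableEq α] [Fintype β] [DecidableEq β]
    [Fintype ρ] [DecidableEq ρ] (ψ : Matrix ((α × β) × ρ) ((α × β) × ρ) ℂ)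

def blk (r s : ρ) : Matrix (α × β) (α × β) ℂ := Matrix.of fun i j => ψ (i, r) (j, s)

lemma sigma_apply (U : Matrix.unitaryGroup (α × β) ℂ) (i j : β × ρ) :
    sigmaA2R ψ (U : Matrix (α × β) (α × β) ℂ) i j =
      ∑ a, cj (blk ψ i.2 j.2) U (a, i.1) (a, j.1) := by
  simp only [sigmaA2R, Matrix.of_apply, cj]
  refine Finset.sum_congr rfl fun a _ => ?_
  simp only [Matrix.mul_apply, Matrix.conjTranspose_apply, Matrix.kroneckerMap_apply, blk,
    Matrix.of_apply, Fintype.sum_prod_type (α₁ := α × β), Matrix.one_apply]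
  simp [apply_ite]

noncomputable def MM : Matrix (α × β) (α × β) ℂ := ∑ r, ∑ s, ptrFst ψ s r • blk ψ r s

lemma ptrSnd_eq : ptrSnd ψ = ∑ r, blk ψ r r := by
  ext i j; simp [ptrSnd, blk, Matrix.sum_apply]

lemma cj_sum {n ι : Type} [Fintype n] [DecidableEq n] [Fintype ι] (f : ι → Matrix n n ℂ)
    (U : Matrix.unitaryGroup n ℂ) : cj (∑ i, f i) U = ∑ i, cj (f i) U := by
  simp only [cj, Finset.mul_sum, Finset.sum_mul]

lemma cj_smul {n : Type} [Fintype n] [DecidableEq n] (c : ℂ) (f : Matrix n n ℂ)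
    (U : Matrix.unitaryGroup n ℂ) : cj (c • f) U = c • cj f U := by
  simp [cj]

lemma integrand_eq (U : Matrix.unitaryGroup (α × β) ℂ) :
    (sigmaA2R ψ (U : Matrix (α × β) (α × β) ℂ)
          * (ptrSnd (sigmaA2R ψ U) ⊗ₖ ptrFst (sigmaA2R ψ U))).trace =
    ∑ x : β × β, ∑ y : α × α, cj (MM ψ) U (y.1, x.1) (y.1, x.2) *
      cj (ptrSnd ψ) U (y.2, x.2) (y.2, x.1) := by
  have hR : ∀ s r, ptrFst (sigmaA2R ψ (U : Matrix (α × β) (α × β) ℂ)) s r = ptrFst ψ s r := by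
    intro s r
    simp only [ptrFst, Matrix.of_apply, sigma_apply]
    rw [Finset.sum_comm, ← Fintype.sum_prod_type (f := fun x : α × β => cj (blk ψ s r) U x x)]
    exact cj_trace (blk ψ s r) U
  have hA : ∀ i j, ptrSnd (sigmaA2R ψ (U : Matrix (α × β) (α × β) ℂ)) i j =
      ∑ a, cj (ptrSnd ψ) U (a, i) (a, j) := by
    intro i j
    rw [ptrSnd_eq, cj_sum]
    simp only [ptrSnd, Matrix.of_apply, sigma_apply, Matrix.sum_apply]
    rw [Finset.sum_comm]
  have hM : ∀ i j, cj (MM ψ) U i j = ∑ r, ∑ s, ptrFst ψ s r * cj (blk ψ r s) U i j := by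
    intro i j
    simp only [MM, cj_sum, cj_smul, Matrix.sum_apply, Matrix.smul_apply, smul_eq_mul]
  have h1 : ∀ x : β × β, ∑ y : α × α, cj (MM ψ) U (y.1, x.1) (y.1, x.2) *
      cj (ptrSnd ψ) U (y.2, x.2) (y.2, x.1) = ∑ r, ∑ s,
      (∑ a, cj (blk ψ r s) U (a, x.1) (a, x.2)) * (ptrSnd (sigmaA2R ψ (U : Matrix (α × β) (α × β) ℂ)) x.2 x.1 *
        ptrFst ψ s r) := by
    intro x
    rw [Fintype.sum_prod_type]
    dsimp only
    rw [← Finset.sum_mul_sum, ← hA]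
    simp only [hM]
    rw [Finset.sum_comm, Finset.sum_mul]
    refine Finset.sum_congr rfl fun r _ => ?_
    rw [Finset.sum_comm, Finset.sum_mul]
    refine Finset.sum_congr rfl fun s _ => ?_
    rw [← Finset.mul_sum]; ring
  simp only [h1, Matrix.trace, Matrix.diag_apply, Matrix.mul_apply, Matrix.kroneckerMap_apply, hR,
    Fintype.sum_prod_type, sigma_apply]
  refine Finset.sum_congr rfl fun i _ => ?_
  rw [Finset.sum_comm]

lemma MM_trace : (MM ψ).trace = (ptrFst ψ * ptrFst ψ).trace := by
  simp only [MM, Matrix.trace_sum, Matrix.trace_smul, smul_eq_mul]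
  simp only [Matrix.trace, Matrix.diag_apply, Matrix.mul_apply]
  refine Finset.sum_congr rfl fun i _ => Finset.sum_congr rfl fun j _ => ?_
  rw [mul_comm]; rfl

lemma MN_trace : (MM ψ * ptrSnd ψ).trace = (ψ * (ptrSnd ψ ⊗ₖ ptrFst ψ)).trace := by
  simp only [MM, Finset.sum_mul, Matrix.trace_sum, Matrix.smul_mul, Matrix.trace_smul, smul_eq_mul]
  simp only [Matrix.trace, Matrix.diag_apply, Matrix.mul_apply, Matrix.kroneckerMap_apply,
    Fintype.sum_prod_type (α₁ := α × β), blk, Matrix.of_apply, Finset.mul_sum]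
  rw [Finset.sum_comm' (t' := Finset.univ) (s' := fun _ => Finset.univ) (by simp)]
  have : ∀ f : (α × β) → ρ → (α × β) → ρ → ℂ, ∑ s, ∑ r, ∑ i, ∑ j, f i r j s = ∑ i, ∑ r, ∑ j, ∑ s, f i r j s := by
    intro f
    calc _ = ∑ s, ∑ i, ∑ r, ∑ j, f i r j s :=
          Finset.sum_congr rfl fun s _ => Finset.sum_comm
      _ = ∑ i, ∑ s, ∑ r, ∑ j, f i r j s := Finset.sum_comm
      _ = ∑ i, ∑ r, ∑ s, ∑ j, f i r j s := Finset.sum_congr rfl fun s _ => Finset.sum_comm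
      _ = _ := Finset.sum_congr rfl fun s _ => Finset.sum_congr rfl fun s _ => Finset.sum_comm
  rw [← this]
  refine Finset.sum_congr rfl fun _ _ => Finset.sum_congr rfl fun _ _ =>
    Finset.sum_congr rfl fun _ _ => Finset.sum_congr rfl fun _ _ => by ring

lemma N_trace : (ptrSnd ψ).trace = ψ.trace := by
  simp only [Matrix.trace, Matrix.diag_apply, ptrSnd, Matrix.of_apply, Fintype.sum_prod_type (α₁ := α × β)]

end red

/-- **Haar average of the cross term:**
`∫ Tr[σ^{A₂R}(U)(σ^{A₂}(U) ⊗ σ^R(U))] dU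
  = ((p+q)/2) Tr[(ψ^R)²] + ((p−q)/2) Tr[ψ^{AR}(ψ^A ⊗ ψ^R)]`, with
`p = (d_{A₁}+d_{A₂})/(d_A+1)` and `q = (d_{A₁}−d_{A₂})/(d_A−1)`. -/
theorem average_cross_term
    {ιA₁ ιA₂ ιR : Type} [Fintype ιA₁] [DecidableEq ιA₁] [Fintype ιA₂] [DecidableEq ιA₂]
    [Fintype ιR] [DecidableEq ιR]
    (hdA : 2 ≤ Fintype.card ιA₁ * Fintype.card ιA₂)
    (ψ : Matrix ((ιA₁ × ιA₂) × ιR) ((ιA₁ × ιA₂) × ιR) ℂ)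
    (hψ : ψ.PosSemidef) (hψtr : ψ.trace = 1)
    (μ : Measure (Matrix.unitaryGroup (ιA₁ × ιA₂) ℂ)) [IsProbabilityMeasure μ]
    (hμ : ∀ V : Matrix.unitaryGroup (ιA₁ × ιA₂) ℂ,
      μ.map (fun U : Matrix.unitaryGroup (ιA₁ × ιA₂) ℂ => V * U) = μ) :
    (∫ U : Matrix.unitaryGroup (ιA₁ × ιA₂) ℂ,
        (sigmaA2R ψ (U : Matrix (ιA₁ × ιA₂) (ιA₁ × ιA₂) ℂ)
          * (ptrSnd (sigmaA2R ψ U) ⊗ₖ ptrFst (sigmaA2R ψ U))).trace ∂μ)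
      = ((((Fintype.card ιA₁ : ℂ) + (Fintype.card ιA₂ : ℂ)) /
            ((Fintype.card ιA₁ : ℂ) * (Fintype.card ιA₂ : ℂ) + 1)
          + ((Fintype.card ιA₁ : ℂ) - (Fintype.card ιA₂ : ℂ)) /
            ((Fintype.card ιA₁ : ℂ) * (Fintype.card ιA₂ : ℂ) - 1)) / 2)
          * (ptrFst ψ * ptrFst ψ).trace
        + ((((Fintype.card ιA₁ : ℂ) + (Fintype.card ιA₂ : ℂ)) /
            ((Fintype.card ιA₁ : ℂ) * (Fintype.card ιA₂ : ℂ) + 1)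
          - ((Fintype.card ιA₁ : ℂ) - (Fintype.card ιA₂ : ℂ)) /
            ((Fintype.card ιA₁ : ℂ) * (Fintype.card ιA₂ : ℂ) - 1)) / 2)
          * (ψ * (ptrSnd ψ ⊗ₖ ptrFst ψ)).trace := by
  have hn : 2 ≤ Fintype.card (ιA₁ × ιA₂) := by rwa [Fintype.card_prod]
  obtain ⟨P, Q, hPQ⟩ := EE_form μ hμ (MM ψ) (ptrSnd ψ) hn
  have t1 := EE_tr1 μ (MM ψ) (ptrSnd ψ)
  have t2 := EE_tr2 μ (MM ψ) (ptrSnd ψ)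
  rw [MM_trace, N_trace, hψtr, mul_one] at t1
  rw [MN_trace] at t2
  have hI : (∫ U : Matrix.unitaryGroup (ιA₁ × ιA₂) ℂ,
        (sigmaA2R ψ (U : Matrix (ιA₁ × ιA₂) (ιA₁ × ιA₂) ℂ)
          * (ptrSnd (sigmaA2R ψ U) ⊗ₖ ptrFst (sigmaA2R ψ U))).trace ∂μ) =
      ∑ x : ιA₂ × ιA₂, ∑ y : ιA₁ × ιA₁,
        EE μ (MM ψ) (ptrSnd ψ) (y.1, x.1) (y.1, x.2) (y.2, x.2) (y.2, x.1) := by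
    simp only [integrand_eq]
    rw [integral_finsetSum _ fun x _ => (BM.sum fun y => (BM.cj _ _ _).mul (BM.cj _ _ _)).integrable μ]
    refine Finset.sum_congr rfl fun x _ => ?_
    rw [integral_finsetSum _ fun y _ => ((BM.cj _ _ _).mul (BM.cj _ _ _)).integrable μ]
    rfl
  rw [hI, ← t1, ← t2]
  have c1 : ∑ i : ιA₁ × ιA₂, ∑ k : ιA₁ × ιA₂, EE μ (MM ψ) (ptrSnd ψ) i i k k = ((Fintype.card ιA₁ : ℂ) * Fintype.card ιA₂)^2 * P
      + ((Fintype.card ιA₁ : ℂ) * Fintype.card ιA₂) * Q := by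
    have : ∀ i k : ιA₁ × ιA₂, (i = k ∧ k = i) ↔ i = k := fun i k => ⟨fun h => h.1, fun h => ⟨h, h.symm⟩⟩
    simp [hPQ, this, Finset.sum_add_distrib]
    ring
  have c2 : ∑ i : ιA₁ × ιA₂, ∑ k : ιA₁ × ιA₂, EE μ (MM ψ) (ptrSnd ψ) i k k i = ((Fintype.card ιA₁ : ℂ) * Fintype.card ιA₂) * P
      + ((Fintype.card ιA₁ : ℂ) * Fintype.card ιA₂)^2 * Q := by
    have : ∀ i k : ιA₁ × ιA₂, (i = k ∧ k = i) ↔ i = k := fun i k => ⟨fun h => h.1, fun h => ⟨h, h.symm⟩⟩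
    simp [hPQ, this, Finset.sum_add_distrib]
    ring
  have c3 : ∑ x : ιA₂ × ιA₂, ∑ y : ιA₁ × ιA₁,
      EE μ (MM ψ) (ptrSnd ψ) (y.1, x.1) (y.1, x.2) (y.2, x.2) (y.2, x.1) =
      (Fintype.card ιA₁ : ℂ)^2 * Fintype.card ιA₂ * P
      + (Fintype.card ιA₁ : ℂ) * (Fintype.card ιA₂)^2 * Q := by
    have h1 : ∀ i k : ιA₂, (i = k ∧ k = i) ↔ i = k := fun i k => ⟨fun h => h.1, fun h => ⟨h, h.symm⟩⟩
    have h2 : ∀ i k : ιA₁, (i = k ∧ k = i) ↔ i = k := fun i k => ⟨fun h => h.1, fun h => ⟨h, h.symm⟩⟩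
    simp only [hPQ, Prod.mk.injEq, true_and, and_true, h1, h2, Fintype.sum_prod_type, Finset.sum_add_distrib]
    simp
    ring
  rw [c1, c2, c3]
  have hd : (2:ℝ) ≤ (Fintype.card ιA₁ : ℝ) * Fintype.card ιA₂ := by exact_mod_cast hdA
  have e1 : (Fintype.card ιA₁ : ℂ) * Fintype.card ιA₂ + 1 ≠ 0 := by
    intro h
    have h' : (Fintype.card ιA₁ : ℝ) * Fintype.card ιA₂ + 1 = 0 := by exact_mod_cast h
    linarith
  have e2 : (Fintype.card ιA₁ : ℂ) * Fintype.card ιA₂ - 1 ≠ 0 := by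
    intro h
    have h' : (Fintype.card ιA₁ : ℝ) * Fintype.card ιA₂ - 1 = 0 := by exact_mod_cast h
    linarith
  field_simp
  ring
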